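/- arXiv:2001.06866 — 2 statements merged into one kernel-verified Lean document; each statement's English description precedes it below -/
import Mathlib

section
/- Theorem 3, first part: if 0 < θ < π/3, then the length of the minimum construction tree is strictly less than the length of the full Steiner tree: 2·dist(A₁',F₁₂) + 2·dist(A₃,F₃₄) + 2·sin(θ/2)·dist(F₁₂,F₃₄) < 2·dist(A₁',O₁₂) + 2·dist(A₃,O₃₄) + dist(O₁₂,O₃₄); equivalently, 2·(a12 + a34)·cos(θ/2) < (a12 + a34)·(√3/2 + cos(θ/2)/(2·sin(θ/2))). -/
open Real EuclideanGeometry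

noncomputable def pt (x y : ℝ) : EuclideanSpace ℝ (Fin 2) :=
  (WithLp.equiv 2 (Fin 2 → ℝ)).symm ![x, y]

theorem dist_pt (a b c e : ℝ) : dist (pt a b) (pt c e) = Real.sqrt ((a - c)^2 + (b - e)^2) := by
  rw [EuclideanSpace.dist_eq]
  simp [pt, Real.dist_eq, sq_abs]

theorem dist_vert (b e : ℝ) : dist (pt 0 b) (pt 0 e) = |b - e| := by
  rw [dist_pt]
  simp [Real.sqrt_sq_eq_abs]

theorem stmt_11 (a12 a34 d θ : ℝ) (ha12 : 0 < a12) (ha34 : 0 < a34)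
    (hd : max a12 a34 < d)
    (hθ : θ = 2 * Real.arctan ((a12 + a34) / (2 * d)))
    (hθ' : 0 < θ ∧ θ < π / 3)
    (A₁' A₂' A₃ A₄ F₁₂ F₃₄ O₁₂ O₃₄ : EuclideanSpace ℝ (Fin 2))
    (hA₁ : A₁' = pt (-(a12 / 2)) d) (hA₂ : A₂' = pt (a12 / 2) d)
    (hA₃ : A₃ = pt (a34 / 2) 0) (hA₄ : A₄ = pt (-(a34 / 2)) 0)
    (hF₁₂ : F₁₂ = pt 0 (d - a12 / 2 * Real.tan (θ / 2)))
    (hF₃₄ : F₃₄ = pt 0 (a34 / 2 * Real.tan (θ / 2)))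
    (hO₁₂ : O₁₂ = pt 0 (d - a12 / (2 * Real.sqrt 3)))
    (hO₃₄ : O₃₄ = pt 0 (a34 / (2 * Real.sqrt 3))) :
    2 * dist A₁' F₁₂ + 2 * dist A₃ F₃₄ + 2 * Real.sin (θ / 2) * dist F₁₂ F₃₄ <
      2 * dist A₁' O₁₂ + 2 * dist A₃ O₃₄ + dist O₁₂ O₃₄ ∧
    2 * (a12 + a34) * Real.cos (θ / 2) <
      (a12 + a34) * (Real.sqrt 3 / 2 + Real.cos (θ / 2) / (2 * Real.sin (θ / 2))) := by
  obtain ⟨h0, h1⟩ := hθ'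
  have hd0 : 0 < d := lt_trans ha12 (lt_of_le_of_lt (le_max_left _ _) hd)
  have hd1 : a12 < d := lt_of_le_of_lt (le_max_left _ _) hd
  have hd2 : a34 < d := lt_of_le_of_lt (le_max_right _ _) hd
  have ht : Real.tan (θ / 2) = (a12 + a34) / (2 * d) := by
    rw [hθ, mul_div_cancel_left₀ _ (by norm_num : (2:ℝ) ≠ 0), Real.tan_arctan]
  set φ := θ / 2 with hφ
  have hφ0 : 0 < φ := by linarith
  have hφ1 : φ < π / 6 := by linarith
  have hpi := Real.pi_pos
  have hs : 0 < Real.sin φ := Real.sin_pos_of_pos_of_lt_pi hφ0 (by linarith)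
  have hc : 0 < Real.cos φ := Real.cos_pos_of_mem_Ioo ⟨by linarith, by linarith⟩
  have hsc := Real.sin_sq_add_cos_sq φ
  have h3 : 0 < Real.sqrt 3 := by positivity
  have h33 : Real.sqrt 3 ^ 2 = 3 := Real.sq_sqrt (by norm_num)
  have key : 4 * Real.sin φ * Real.cos φ < Real.sqrt 3 * Real.sin φ + Real.cos φ := by
    have : Real.sin (2 * φ) < Real.sin (φ + π / 6) :=
      Real.sin_lt_sin_of_lt_of_le_pi_div_two (by linarith) (by linarith) (by linarith)
    rw [Real.sin_two_mul, Real.sin_add, Real.sin_pi_div_six, Real.cos_pi_div_six] at this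
    linarith
  have hS : 0 < a12 + a34 := by linarith
  have main : 2 * (a12 + a34) * Real.cos φ <
      (a12 + a34) * (Real.sqrt 3 / 2 + Real.cos φ / (2 * Real.sin φ)) := by
    have e : Real.sqrt 3 / 2 + Real.cos φ / (2 * Real.sin φ)
        = (Real.sqrt 3 * Real.sin φ + Real.cos φ) / (2 * Real.sin φ) := by
      field_simp
    have : 2 * Real.cos φ < Real.sqrt 3 / 2 + Real.cos φ / (2 * Real.sin φ) := by
      rw [e, lt_div_iff₀ (by positivity)]
      linarith
    nlinarith
  refine ⟨?_, main⟩
  have ht1 : Real.tan φ < 1 := by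
    rw [ht, div_lt_one (by positivity)]; linarith
  have ht0 : 0 < Real.tan φ := by rw [ht]; positivity
  have hdS : d = (a12 + a34) * (Real.cos φ / (2 * Real.sin φ)) := by
    have := Real.tan_eq_sin_div_cos φ
    rw [ht] at this
    field_simp at this ⊢
    linarith
  have e1 : ∀ a : ℝ, 0 < a → Real.sqrt ((a / 2)^2 + (a / 2 * Real.tan φ)^2) = a / (2 * Real.cos φ) := by
    intro a ha
    rw [Real.sqrt_eq_iff_mul_self_eq_of_pos (by positivity), Real.tan_eq_sin_div_cos]
    field_simp
    linarith
  have e2 : ∀ a : ℝ, 0 < a → Real.sqrt ((a / 2)^2 + (a / (2 * Real.sqrt 3))^2) = a / Real.sqrt 3 := by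
    intro a ha
    rw [Real.sqrt_eq_iff_mul_self_eq_of_pos (by positivity)]
    field_simp
    rw [h33]; norm_num
  have f1 : dist A₁' F₁₂ = a12 / (2 * Real.cos φ) := by
    rw [hA₁, hF₁₂, dist_pt, ← e1 a12 ha12]; congr 1; ring
  have f2 : dist A₃ F₃₄ = a34 / (2 * Real.cos φ) := by
    rw [hA₃, hF₃₄, dist_pt, ← e1 a34 ha34]; congr 1; ring
  have f3 : dist A₁' O₁₂ = a12 / Real.sqrt 3 := by
    rw [hA₁, hO₁₂, dist_pt, ← e2 a12 ha12]; congr 1; ring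
  have f4 : dist A₃ O₃₄ = a34 / Real.sqrt 3 := by
    rw [hA₃, hO₃₄, dist_pt, ← e2 a34 ha34]; congr 1; ring
  have f5 : dist F₁₂ F₃₄ = d - (a12 + a34) / 2 * Real.tan φ := by
    rw [hF₁₂, hF₃₄, dist_vert, abs_of_pos]
    · ring
    · nlinarith
  have f6 : d - (a12 + a34) / (2 * Real.sqrt 3) ≤ dist O₁₂ O₃₄ := by
    rw [hO₁₂, hO₃₄, dist_vert]
    refine le_trans (le_of_eq ?_) (le_abs_self _)
    ring
  have L : 2 * (a12 / (2 * Real.cos φ)) + 2 * (a34 / (2 * Real.cos φ))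
      + 2 * Real.sin φ * (d - (a12 + a34) / 2 * Real.tan φ) = 2 * (a12 + a34) * Real.cos φ := by
    rw [hdS, Real.tan_eq_sin_div_cos]
    field_simp
    linear_combination -hsc
  have R : 2 * (a12 / Real.sqrt 3) + 2 * (a34 / Real.sqrt 3) + (d - (a12 + a34) / (2 * Real.sqrt 3))
      = (a12 + a34) * (Real.sqrt 3 / 2 + Real.cos φ / (2 * Real.sin φ)) := by
    have : 1 / Real.sqrt 3 = Real.sqrt 3 / 3 := by
      field_simp; linarith
    rw [mul_add, ← hdS]
    linear_combination (3 / 2 * (a12 + a34)) * this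
  rw [f1, f2, f3, f4, f5, L]
  linarith
end

section
/- Theorem 3, second part: if π/3 < θ < π/2, then the length of the minimum construction tree is strictly greater than the length of the full Steiner tree: 2·dist(A₁',F₁₂) + 2·dist(A₃,F₃₄) + 2·sin(θ/2)·dist(F₁₂,F₃₄) > 2·dist(A₁',O₁₂) + 2·dist(A₃,O₃₄) + dist(O₁₂,O₃₄); equivalently, 2·(a12 + a34)·cos(θ/2) > (a12 + a34)·(√3/2 + cos(θ/2)/(2·sin(θ/2))). -/
open Real EuclideanGeometry

theorem dist_pt_s12 (x y z w : ℝ) : dist (pt x y) (pt z w) = √((x - z)^2 + (y - w)^2) := by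
  simp [pt, EuclideanSpace.dist_eq, Fin.sum_univ_two, Real.dist_eq, sq_abs]

theorem dist_val (x y z w r : ℝ) (hr : 0 ≤ r) (h : (x - z)^2 + (y - w)^2 = r^2) :
    dist (pt x y) (pt z w) = r := by
  rw [dist_pt_s12, h, Real.sqrt_sq hr]

theorem stmt_12 (a12 a34 d θ : ℝ) (ha12 : 0 < a12) (ha34 : 0 < a34)
    (hd : max a12 a34 < d)
    (hθ : θ = 2 * Real.arctan ((a12 + a34) / (2 * d)))
    (hθ' : π / 3 < θ ∧ θ < π / 2)
    (A₁' A₂' A₃ A₄ F₁₂ F₃₄ O₁₂ O₃₄ : EuclideanSpace ℝ (Fin 2))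
    (hA₁ : A₁' = pt (-(a12 / 2)) d) (hA₂ : A₂' = pt (a12 / 2) d)
    (hA₃ : A₃ = pt (a34 / 2) 0) (hA₄ : A₄ = pt (-(a34 / 2)) 0)
    (hF₁₂ : F₁₂ = pt 0 (d - a12 / 2 * Real.tan (θ / 2)))
    (hF₃₄ : F₃₄ = pt 0 (a34 / 2 * Real.tan (θ / 2)))
    (hO₁₂ : O₁₂ = pt 0 (d - a12 / (2 * Real.sqrt 3)))
    (hO₃₄ : O₃₄ = pt 0 (a34 / (2 * Real.sqrt 3))) :
    2 * dist A₁' F₁₂ + 2 * dist A₃ F₃₄ + 2 * Real.sin (θ / 2) * dist F₁₂ F₃₄ >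
      2 * dist A₁' O₁₂ + 2 * dist A₃ O₃₄ + dist O₁₂ O₃₄ ∧
    2 * (a12 + a34) * Real.cos (θ / 2) >
      (a12 + a34) * (Real.sqrt 3 / 2 + Real.cos (θ / 2) / (2 * Real.sin (θ / 2))) := by
  obtain ⟨h1, h2⟩ := hθ'
  have hdp : 0 < d := ha12.trans ((le_max_left _ _).trans_lt hd)
  have htan : Real.tan (θ / 2) = (a12 + a34) / (2 * d) := by
    rw [hθ, mul_div_cancel_left₀ _ (two_ne_zero), Real.tan_arctan]
  have hpi := Real.pi_pos
  have key : 2 * sin (θ/2) * cos (θ/2) > sin (θ/2) * (√3/2) + cos (θ/2) * (1/2) := by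
    have := Real.sin_lt_sin_of_lt_of_le_pi_div_two (x := θ/2 + π/6) (y := 2 * (θ/2))
      (by linarith) (by linarith) (by linarith)
    rw [Real.sin_add, Real.sin_two_mul, Real.cos_pi_div_six, Real.sin_pi_div_six] at this
    exact this
  have hs : 0 < sin (θ/2) := Real.sin_pos_of_pos_of_lt_pi (by linarith) (by linarith)
  have hc : 0 < cos (θ/2) := Real.cos_pos_of_mem_Ioo ⟨by linarith, by linarith⟩
  have hcs : 0 < cos (θ/2) ^ 2 - sin (θ/2) ^ 2 := by
    rw [← Real.cos_two_mul']
    exact Real.cos_pos_of_mem_Ioo ⟨by linarith, by linarith⟩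
  have h1' := Real.sin_sq_add_cos_sq (θ/2)
  rw [Real.tan_eq_sin_div_cos] at *
  generalize sin (θ/2) = s at *
  generalize cos (θ/2) = c at *
  have hq : √3 ^ 2 = 3 := Real.sq_sqrt (by norm_num)
  have hq0 : 0 < √3 := by positivity
  generalize √3 = q at *
  have hS : 0 < a12 + a34 := by linarith
  have hdd : d = (a12 + a34) * c / (2 * s) := by
    field_simp at htan ⊢
    linarith
  have main : 2 * (a12 + a34) * c > (a12 + a34) * (q / 2 + c / (2 * s)) := by
    have : q / 2 + c / (2 * s) < 2 * c := by
      have e : q / 2 + c / (2 * s) = (s * (q/2) + c * (1/2)) / s := by field_simp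
      rw [e, div_lt_iff₀ hs]; linarith
    nlinarith
  refine ⟨?_, main⟩
  have hq1 : 1 < q := by nlinarith
  have hlt : s < c := by nlinarith
  have d1 : dist A₁' F₁₂ = a12 / (2 * c) := by
    rw [hA₁, hF₁₂]
    apply dist_val _ _ _ _ _ (by positivity)
    field_simp
    linear_combination a12^2 * h1'
  have d2 : dist A₃ F₃₄ = a34 / (2 * c) := by
    rw [hA₃, hF₃₄]
    apply dist_val _ _ _ _ _ (by positivity)
    field_simp
    linear_combination a34^2 * h1'
  have d3 : dist F₁₂ F₃₄ = (a12 + a34) * (c^2 - s^2) / (2 * (s * c)) := by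
    rw [hF₁₂, hF₃₄]
    apply dist_val _ _ _ _ _ (by positivity)
    rw [hdd]
    field_simp
    ring
  have d4 : dist A₁' O₁₂ = a12 / q := by
    rw [hA₁, hO₁₂]
    apply dist_val _ _ _ _ _ (by positivity)
    field_simp
    linear_combination a12^2 * hq
  have d5 : dist A₃ O₃₄ = a34 / q := by
    rw [hA₃, hO₃₄]
    apply dist_val _ _ _ _ _ (by positivity)
    field_simp
    linear_combination a34^2 * hq
  have d6 : dist O₁₂ O₃₄ = (a12 + a34) * (c * q - s) / (2 * (s * q)) := by
    rw [hO₁₂, hO₃₄]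
    have : 0 ≤ c * q - s := by nlinarith
    apply dist_val _ _ _ _ _ (by positivity)
    rw [hdd]
    field_simp
    ring
  rw [d1, d2, d3, d4, d5, d6]
  have eL : 2 * (a12 / (2 * c)) + 2 * (a34 / (2 * c)) +
      2 * s * ((a12 + a34) * (c^2 - s^2) / (2 * (s * c))) = 2 * (a12 + a34) * c := by
    field_simp
    linear_combination -h1'
  have eR : 2 * (a12 / q) + 2 * (a34 / q) + (a12 + a34) * (c * q - s) / (2 * (s * q)) =
      (a12 + a34) * (q / 2 + c / (2 * s)) := by
    field_simp
    linear_combination -s * hq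
  rw [eL, eR]
  exact main
end
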